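/- arXiv:1605.01024 — 2 statements merged into one kernel-verified Lean document; each statement's English description precedes it below -/
import Mathlib

section
/- There exists a semifilter T on ω such that, as a subspace of the Cantor space 2^ω: (i) T is the union of a completely metrizable subspace and a countable subspace; (ii) no nonempty relatively open subset of T is σ-compact; and (iii) no nonempty relatively open subset of T is completely metrizable. (Consequently T is homeomorphic to van Douwen's space 𝐓.) -/
open Set

abbrev Cantor := ℕ → Bool

def UpwardClosed (S : Set Cantor) : Prop :=
  ∀ x ∈ S, ∀ y : Cantor, (∀ n, x n = true → y n = true) → y ∈ S

def DownwardClosed (R : Set Cantor) : Prop :=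
  ∀ y ∈ R, ∀ x : Cantor, (∀ n, x n = true → y n = true) → x ∈ R

def ClosedUnderFinMod (S : Set Cantor) : Prop :=
  ∀ x ∈ S, ∀ y : Cantor, {n | x n ≠ y n}.Finite → y ∈ S

def IsSemifilter (S : Set Cantor) : Prop :=
  (fun _ => false) ∉ S ∧ (fun _ => true) ∈ S ∧ UpwardClosed S ∧ ClosedUnderFinMod S

def IsSemiideal (R : Set Cantor) : Prop :=
  (fun _ => false) ∈ R ∧ (fun _ => true) ∉ R ∧ DownwardClosed R ∧ ClosedUnderFinMod R

def ClosedUnderInter (S : Set Cantor) : Prop :=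
  ∀ x ∈ S, ∀ y ∈ S, (fun n => x n && y n) ∈ S

def IsFilterOnOmega (F : Set Cantor) : Prop := IsSemifilter F ∧ ClosedUnderInter F

def IsHomogeneous (X : Type*) [TopologicalSpace X] : Prop :=
  ∀ x y : X, ∃ h : X ≃ₜ X, h x = y

def IsFsigma (A : Set Cantor) : Prop :=
  ∃ F : ℕ → Set Cantor, (∀ n, IsClosed (F n)) ∧ A = ⋃ n, F n

def DOmegaSigmaTwo (X : Set Cantor) : Prop :=
  ∃ A : ℕ → Set Cantor, (∀ n, IsFsigma (A n)) ∧ Monotone A ∧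
    X = ⋃ n ∈ {n : ℕ | Odd n}, (A n \ ⋃ m < n, A m)

def InDelta (X : Set Cantor) : Prop := DOmegaSigmaTwo X ∧ DOmegaSigmaTwo Xᶜ

def WadgeLe (A B : Set Cantor) : Prop :=
  ∃ f : Cantor → Cantor, Continuous f ∧ A = f ⁻¹' B

def WadgeEquiv (A B : Set Cantor) : Prop := WadgeLe A B ∧ WadgeLe B A

def CompletelyMetrizable (X : Type*) [t : TopologicalSpace X] : Prop :=
  ∃ m : MetricSpace X, m.toUniformSpace.toTopologicalSpace = t ∧
    @CompleteSpace X m.toUniformSpace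

def FirstCategory (X : Type*) [TopologicalSpace X] : Prop :=
  ∃ f : ℕ → Set X, (∀ n, interior (closure (f n)) = ∅) ∧ (Set.univ : Set X) = ⋃ n, f n

def CantorFin : Set Cantor := {x | {n | x n = true}.Finite}

def BorelSet (X : Set Cantor) : Prop := @MeasurableSet Cantor (borel Cantor) X

open Filter Topology TopologicalSpace

/-!
Fix `s ⊆ ℕ` infinite and co-infinite, and let `T` consist of the sets meeting `s` in an infinite
set together with the finite modifications of `sᶜ`. The first part is Gδ and the second is
countable, which gives (i). The first part is also dense, so `T` is comeagre, while every semifilter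
is codense; hence a σ-compact relatively open subset of `T` would be meagre, which gives (ii). For
(iii), freeze the coordinates in `s` at the values of some finite modification of `sᶜ`. Inside any
open set this cuts out of `T` a relatively closed set which is countable, but which has no isolated
points because the coordinates outside `s` may still be flipped one at a time. By Baire, such a set
is empty or not completely metrizable.
-/

section CompleteMetrizability

variable {X : Type*} [TopologicalSpace X]

theorem isCompletelyMetrizableSpace_of_isOpen [IsCompletelyMetrizableSpace X] {U : Set X}
    (hU : IsOpen U) : IsCompletelyMetrizableSpace U := by
  let := upgradeIsCompletelyMetrizable X
  lift U to Opens X using hU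
  exact inferInstanceAs (IsCompletelyMetrizableSpace U.CompleteCopy)

theorem isCompletelyMetrizableSpace_iInter [T2Space X] {ι : Type*} [Countable ι] [Nonempty ι]
    {S : ι → Set X} [∀ i, IsCompletelyMetrizableSpace (S i)] :
    IsCompletelyMetrizableSpace (⋂ i, S i : Set X) := by
  inhabit ι
  let diag : (⋂ i, S i : Set X) → ∀ i, S i := fun x i => ⟨x, mem_iInter.1 x.2 i⟩
  have diag_continuous : Continuous diag :=
    continuous_pi fun i => continuous_subtype_val.subtype_mk _
  have diag_isEmbedding : IsEmbedding diag :=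
    .of_comp (g := fun y : ∀ i, S i => (y default : X)) diag_continuous (by fun_prop)
      IsEmbedding.subtypeVal
  have range_diag : range diag = ⋂ i, {y | (y i : X) = y default} := by
    ext y
    simp only [mem_range, mem_iInter, mem_ofPred_eq]
    refine ⟨by rintro ⟨x, rfl⟩ i; rfl, fun hy => ?_⟩
    exact ⟨⟨y default, mem_iInter.2 fun i => hy i ▸ (y i).2⟩,
      funext fun i => Subtype.ext (hy i).symm⟩
  have isClosed_range_diag : IsClosed (range diag) := by
    rw [range_diag]
    exact isClosed_iInter fun i => isClosed_eq (by fun_prop) (by fun_prop)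
  exact IsClosedEmbedding.IsCompletelyMetrizableSpace ⟨diag_isEmbedding, isClosed_range_diag⟩

theorem isCompletelyMetrizableSpace_of_isGδ [IsCompletelyMetrizableSpace X] {S : Set X}
    (hS : IsGδ S) : IsCompletelyMetrizableSpace S := by
  obtain ⟨U, hU, rfl⟩ := hS.eq_iInter_nat
  have (n : ℕ) := isCompletelyMetrizableSpace_of_isOpen (hU n)
  exact isCompletelyMetrizableSpace_iInter

theorem isCompletelyMetrizableSpace_inter_of_isClosed {S C : Set X} [IsCompletelyMetrizableSpace S]
    (hC : IsClosed C) : IsCompletelyMetrizableSpace (S ∩ C : Set X) := by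
  have hC' : IsClosed (Subtype.val ⁻¹' (S ∩ C) : Set S) := by
    rw [Subtype.preimage_coe_self_inter]
    exact hC.preimage continuous_subtype_val
  exact (IsClosedEmbedding.inclusion inter_subset_left hC').IsCompletelyMetrizableSpace

end CompleteMetrizability

section BaireCategory

variable {X : Type*} [TopologicalSpace X]

theorem not_countable_of_perfectSpace [T1Space X] [BaireSpace X] [PerfectSpace X] [Nonempty X] :
    ¬ Countable X := by
  intro _
  have := perfectSpace_iff_forall_not_isolated.1 ‹PerfectSpace X›
  have hdense : Dense (⋂ x : X, {x}ᶜ) :=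
    dense_iInter_of_isOpen (fun x => isOpen_compl_singleton)
      fun x => dense_compl_singleton x
  obtain ⟨x, hx⟩ := hdense.nonempty
  exact mem_iInter.1 hx x rfl

theorem perfectSpace_coe_of_preperfect {S : Set X} (hS : Preperfect S) : PerfectSpace S := by
  refine perfectSpace_iff_forall_not_isolated.2 fun x => ?_
  rw [nhds_ne_subtype_neBot_iff]
  exact hS x x.2

theorem not_countable_of_preperfect {S : Set X} [IsCompletelyMetrizableSpace S]
    (hS : Preperfect S) (hne : S.Nonempty) : ¬ S.Countable := by
  let := upgradeIsCompletelyMetrizable S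
  have := perfectSpace_coe_of_preperfect hS
  have := hne.to_subtype
  exact not_countable_of_perfectSpace (X := S)

theorem isMeagre_of_isSigmaCompact_of_dense_compl [T2Space X] {S : Set X} (hS : IsSigmaCompact S)
    (hd : Dense Sᶜ) : IsMeagre S := by
  obtain ⟨K, hK, rfl⟩ := hS
  refine isMeagre_iUnion fun n => IsNowhereDense.isMeagre ?_
  rw [(hK n).isClosed.isNowhereDense_iff, interior_eq_empty_iff_dense_compl]
  exact hd.mono (compl_subset_compl.2 (subset_iUnion K n))

theorem not_isSigmaCompact_inter_of_mem_residual [T2Space X] [BaireSpace X] {S V : Set X}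
    (hS : S ∈ residual X) (hd : Dense Sᶜ) (hV : IsOpen V) (hne : V.Nonempty) :
    ¬ IsSigmaCompact (S ∩ V) := by
  intro hSV
  have hSV_meagre : IsMeagre (S ∩ V) := isMeagre_of_isSigmaCompact_of_dense_compl hSV
    (hd.mono (compl_subset_compl.2 inter_subset_left))
  have hSc_meagre : IsMeagre Sᶜ := by rwa [IsMeagre, compl_compl]
  refine not_isMeagre_of_isOpen hV hne ((hSV_meagre.union hSc_meagre).mono fun x hx => ?_)
  exact (em (x ∈ S)).imp (fun hxS => ⟨hxS, hx⟩) id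

theorem isGδ_setOf_frequently_mem {ι : Type*} {l : Filter ι} [l.IsCountablyGenerated]
    {U : ι → Set X} (hU : ∀ i, IsOpen (U i)) : IsGδ {x | ∃ᶠ i in l, x ∈ U i} := by
  obtain ⟨b, hb⟩ := l.exists_antitone_basis
  have heq : {x | ∃ᶠ i in l, x ∈ U i} = ⋂ n, ⋃ i ∈ b n, U i := by
    ext x
    simp only [mem_ofPred_eq, hb.1.frequently_iff, true_imp_iff, mem_iInter, mem_iUnion,
      exists_prop]
  rw [heq]
  exact .iInter_of_isOpen fun n => isOpen_biUnion fun i _ => hU i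

end BaireCategory

section FiniteModifications

theorem countable_setOf_eventuallyEq_cofinite {ι α : Type*} [Countable ι] [Countable α]
    (z : ι → α) : {x : ι → α | x =ᶠ[cofinite] z}.Countable := by
  classical
  let patch : (Σ F : Finset ι, F → α) → ι → α :=
    fun p i => if hi : i ∈ p.1 then p.2 ⟨i, hi⟩ else z i
  refine (countable_range patch).mono fun x hx => ?_
  have hfin : {i | ¬ x i = z i}.Finite := eventually_cofinite.1 hx
  refine ⟨⟨hfin.toFinset, fun i => x i⟩, funext fun i => ?_⟩
  by_cases hi : x i = z i <;> simp [patch, hi]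

variable {ι : Type*} {X : ι → Type*} [∀ i, TopologicalSpace (X i)]

theorem dense_setOf_eventuallyEq_cofinite (z : ∀ i, X i) :
    Dense {x : ∀ i, X i | ∀ᶠ i in cofinite, x i = z i} := by
  classical
  intro x
  refine mem_closure_of_tendsto (b := atTop) (f := fun F : Finset ι => F.piecewise x z) ?_ ?_
  · refine tendsto_pi_nhds.2 fun i => tendsto_const_nhds.congr' ?_
    filter_upwards [eventually_ge_atTop {i}] with F hF
    exact (F.piecewise_eq_of_mem x z (Finset.singleton_subset_iff.1 hF)).symm
  · refine .of_forall fun F => eventually_cofinite.2 (F.finite_toSet.subset fun i hi => ?_)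
    by_contra hiF
    exact hi (F.piecewise_eq_of_notMem x z hiF)

variable [DecidableEq ι]

theorem tendsto_update_cofinite (x v : ∀ i, X i) :
    Tendsto (fun i => Function.update x i (v i)) cofinite (𝓝 x) := by
  refine tendsto_pi_nhds.2 fun j => tendsto_const_nhds.congr' ?_
  filter_upwards [(finite_singleton j).compl_mem_cofinite] with i hi
  exact (Function.update_of_ne (Ne.symm hi) _ _).symm

theorem accPt_of_frequently_update_mem {S : Set (∀ i, X i)} {x v : ∀ i, X i} (hv : ∀ i, v i ≠ x i)
    (hS : ∃ᶠ i in cofinite, Function.update x i (v i) ∈ S) : AccPt x (𝓟 S) := by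
  refine accPt_iff_frequently.2 ((tendsto_update_cofinite x v).frequently (hS.mono fun i hi => ?_))
  exact ⟨fun h => hv i (Function.update_eq_self_iff.1 h), hi⟩

end FiniteModifications

theorem completelyMetrizable_iff_isCompletelyMetrizableSpace {X : Type*} [TopologicalSpace X] :
    CompletelyMetrizable X ↔ IsCompletelyMetrizableSpace X :=
  ⟨fun h => ⟨h⟩, fun h => h.complete⟩

namespace ClosedUnderFinMod

variable {S S' : Set Cantor}

theorem mem_of_eventuallyEq (hS : ClosedUnderFinMod S) {x y : Cantor} (hx : x ∈ S)
    (hxy : x =ᶠ[cofinite] y) : y ∈ S :=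
  hS x hx y (eventually_cofinite.1 hxy)

theorem union (hS : ClosedUnderFinMod S) (hS' : ClosedUnderFinMod S') :
    ClosedUnderFinMod (S ∪ S') :=
  fun x hx y hxy => hx.imp (hS x · y hxy) (hS' x · y hxy)

theorem compl (hS : ClosedUnderFinMod S) : ClosedUnderFinMod Sᶜ :=
  fun _ hx _ hxy hy =>
    hx (hS.mem_of_eventuallyEq hy (EventuallyEq.symm (eventually_cofinite.2 hxy)))

theorem dense (hS : ClosedUnderFinMod S) (hne : S.Nonempty) : Dense S := by
  obtain ⟨z, hz⟩ := hne
  refine (dense_setOf_eventuallyEq_cofinite z).mono fun x hx => ?_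
  exact hS.mem_of_eventuallyEq hz (EventuallyEq.symm hx)

theorem preperfect_inter_eqOn {V : Set Cantor} {s : Set ℕ} (hS : ClosedUnderFinMod S)
    (hV : IsOpen V) (hsc : sᶜ.Infinite) (p : Cantor) :
    Preperfect (S ∩ V ∩ {y | EqOn y p s}) := by
  rintro y ⟨⟨hyS, hyV⟩, hyp⟩
  refine accPt_of_frequently_update_mem (v := fun n => !y n) (fun n => Bool.not_ne_self _) ?_
  have hflip : ∀ᶠ n in cofinite, Function.update y n (!y n) ∈ V :=
    (tendsto_update_cofinite y fun n => !y n).eventually (hV.mem_nhds hyV)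
  refine ((frequently_cofinite_iff_infinite.2 hsc).and_eventually hflip).mono ?_
  rintro n ⟨hns, hnV⟩
  refine ⟨⟨hS.mem_of_eventuallyEq hyS (Function.update_eventuallyEq_cofinite y n _).symm, hnV⟩, ?_⟩
  exact fun m hm => (Function.update_of_ne (ne_of_mem_of_not_mem hm hns) _ _).trans (hyp hm)

end ClosedUnderFinMod

theorem closedUnderFinMod_setOf_eventuallyEq (z : Cantor) :
    ClosedUnderFinMod {x | x =ᶠ[cofinite] z} :=
  fun _ hx _ hxy => (EventuallyEq.symm (eventually_cofinite.2 hxy)).trans hx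

theorem IsSemifilter.dense_compl {S : Set Cantor} (hS : IsSemifilter S) : Dense Sᶜ :=
  hS.2.2.2.compl.dense ⟨_, hS.1⟩

/-- The points of the Cantor space coding the subsets of `ℕ` that meet `s` in an infinite set. -/
def infiniteTrace (s : Set ℕ) : Set Cantor := {x | ∃ᶠ n in cofinite, n ∈ s ∧ x n = true}

section InfiniteTrace

variable {s : Set ℕ}

theorem closedUnderFinMod_infiniteTrace : ClosedUnderFinMod (infiniteTrace s) := by
  intro x hx y hxy
  refine Frequently.mp hx ((eventually_cofinite.2 hxy).mono fun n hn hxn => ?_)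
  exact hn ▸ hxn

theorem true_mem_infiniteTrace (hs : s.Infinite) : (fun _ => true) ∈ infiniteTrace s :=
  (frequently_cofinite_iff_infinite.2 hs).mono fun _ hn => ⟨hn, rfl⟩

theorem dense_infiniteTrace (hs : s.Infinite) : Dense (infiniteTrace s) :=
  closedUnderFinMod_infiniteTrace.dense ⟨_, true_mem_infiniteTrace hs⟩

theorem isGδ_infiniteTrace : IsGδ (infiniteTrace s) := by
  rw [infiniteTrace, Nat.cofinite_eq_atTop]
  refine isGδ_setOf_frequently_mem (U := fun n => {x : Cantor | n ∈ s ∧ x n = true}) fun n => ?_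
  have hcont : Continuous fun x : Cantor => x n := continuous_apply n
  exact isOpen_const.and ((isOpen_discrete {true}).preimage hcont)

theorem notMem_infiniteTrace_of_eventuallyEq {x : Cantor} (hx : x =ᶠ[cofinite] sᶜ.boolIndicator) :
    x ∉ infiniteTrace s := by
  refine not_frequently.2 (Eventually.mono hx ?_)
  rintro n hn ⟨hns, hxn⟩
  exact (mem_iff_boolIndicator sᶜ n).2 (hn ▸ hxn) hns

end InfiniteTrace

/-- The sets meeting `s` in an infinite set, together with the finite modifications of `sᶜ`. For `s`
infinite and co-infinite, this is a semifilter homeomorphic to van Douwen's space. -/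
def vanDouwenSemifilter (s : Set ℕ) : Set Cantor :=
  infiniteTrace s ∪ {x | x =ᶠ[cofinite] sᶜ.boolIndicator}

section VanDouwenSemifilter

variable {s : Set ℕ}

theorem upwardClosed_vanDouwenSemifilter : UpwardClosed (vanDouwenSemifilter s) := by
  rintro x hx y hxy
  by_cases hy : y ∈ infiniteTrace s
  · exact Or.inl hy
  have hy' : ∀ᶠ n in cofinite, ¬ (n ∈ s ∧ y n = true) := not_frequently.1 hy
  rcases hx with hx | hx
  · exact absurd (Frequently.mono hx fun n hn => ⟨hn.1, hxy n hn.2⟩) hy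
  right
  filter_upwards [hx, hy'] with n hxn hyn
  rw [Bool.eq_iff_iff, ← mem_iff_boolIndicator, mem_compl_iff]
  refine ⟨fun hyt hns => hyn ⟨hns, hyt⟩, fun hns => hxy n ?_⟩
  rwa [hxn, ← mem_iff_boolIndicator]

theorem closedUnderFinMod_vanDouwenSemifilter : ClosedUnderFinMod (vanDouwenSemifilter s) :=
  closedUnderFinMod_infiniteTrace.union (closedUnderFinMod_setOf_eventuallyEq _)

theorem isSemifilter_vanDouwenSemifilter (hs : s.Infinite) (hsc : sᶜ.Infinite) :
    IsSemifilter (vanDouwenSemifilter s) := by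
  refine ⟨?_, Or.inl (true_mem_infiniteTrace hs), upwardClosed_vanDouwenSemifilter,
    closedUnderFinMod_vanDouwenSemifilter⟩
  rintro (h | h)
  · simp [infiniteTrace] at h
  · refine hsc ((eventually_cofinite.1 h).subset fun n hn => ?_)
    simp [(mem_iff_boolIndicator _ _).1 hn]

theorem vanDouwenSemifilter_mem_residual (hs : s.Infinite) :
    vanDouwenSemifilter s ∈ residual Cantor :=
  mem_of_superset (residual_of_dense_Gδ isGδ_infiniteTrace (dense_infiniteTrace hs))
    subset_union_left

theorem countable_vanDouwenSemifilter_inter_eqOn {p : Cantor} (hp : p ∉ infiniteTrace s) :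
    (vanDouwenSemifilter s ∩ {y | EqOn y p s}).Countable := by
  refine (countable_setOf_eventuallyEq_cofinite sᶜ.boolIndicator).mono ?_
  rintro y ⟨hy | hy, hyp⟩
  · exact absurd (Frequently.mono hy fun n hn => ⟨hn.1, hyp hn.1 ▸ hn.2⟩) hp
  · exact hy

theorem not_isSigmaCompact_vanDouwenSemifilter_inter (hs : s.Infinite) (hsc : sᶜ.Infinite)
    {V : Set Cantor} (hV : IsOpen V) (hne : V.Nonempty) :
    ¬ IsSigmaCompact (vanDouwenSemifilter s ∩ V) :=
  not_isSigmaCompact_inter_of_mem_residual (vanDouwenSemifilter_mem_residual hs)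
    (isSemifilter_vanDouwenSemifilter hs hsc).dense_compl hV hne

theorem not_isCompletelyMetrizableSpace_vanDouwenSemifilter_inter (hsc : sᶜ.Infinite)
    {V : Set Cantor} (hV : IsOpen V) (hne : V.Nonempty) :
    ¬ IsCompletelyMetrizableSpace (vanDouwenSemifilter s ∩ V : Set Cantor) := by
  intro _
  obtain ⟨p, hpV, hp⟩ :=
    (dense_setOf_eventuallyEq_cofinite sᶜ.boolIndicator).inter_open_nonempty V hV hne
  let D : Set Cantor := vanDouwenSemifilter s ∩ V ∩ {y | EqOn y p s}
  have : IsCompletelyMetrizableSpace D := isCompletelyMetrizableSpace_inter_of_isClosed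
    (isClosed_set_pi (s := fun n => {p n}) fun _ _ => isClosed_singleton)
  have hD_countable : D.Countable :=
    (countable_vanDouwenSemifilter_inter_eqOn (notMem_infiniteTrace_of_eventuallyEq hp)).mono
      (inter_subset_inter_left _ inter_subset_left)
  have hD_preperfect : Preperfect D :=
    closedUnderFinMod_vanDouwenSemifilter.preperfect_inter_eqOn hV hsc p
  have hpD : p ∈ D := ⟨⟨Or.inr hp, hpV⟩, eqOn_refl p s⟩
  exact not_countable_of_preperfect hD_preperfect ⟨p, hpD⟩ hD_countable

end VanDouwenSemifilter

/-- There is a semifilter homeomorphic to van Douwen's space 𝐓. -/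
theorem exists_semifilter_vanDouwen_T :
    ∃ T : Set Cantor, IsSemifilter T ∧
      (∃ A B : Set Cantor, T = A ∪ B ∧ CompletelyMetrizable A ∧ B.Countable) ∧
      (∀ U : Set Cantor, (∃ V : Set Cantor, IsOpen V ∧ U = T ∩ V) → U.Nonempty →
        ¬ SigmaCompactSpace U) ∧
      (∀ U : Set Cantor, (∃ V : Set Cantor, IsOpen V ∧ U = T ∩ V) → U.Nonempty →
        ¬ CompletelyMetrizable U) := by
  have hodd : {n : ℕ | Odd n}.Infinite := Nat.frequently_atTop_iff_infinite.1 Nat.frequently_odd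
  have heven : {n : ℕ | Odd n}ᶜ.Infinite := by
    simpa only [compl_ofPred, Nat.not_odd_iff_even] using
      Nat.frequently_atTop_iff_infinite.1 Nat.frequently_even
  refine ⟨vanDouwenSemifilter {n | Odd n}, isSemifilter_vanDouwenSemifilter hodd heven,
    ⟨_, _, rfl, ?_, countable_setOf_eventuallyEq_cofinite _⟩, ?_, ?_⟩
  · rw [completelyMetrizable_iff_isCompletelyMetrizableSpace]
    exact isCompletelyMetrizableSpace_of_isGδ isGδ_infiniteTrace
  · rintro _ ⟨V, hV, rfl⟩ hne
    rw [← isSigmaCompact_iff_sigmaCompactSpace]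
    exact not_isSigmaCompact_vanDouwenSemifilter_inter hodd heven hV hne.right
  · rintro _ ⟨V, hV, rfl⟩ hne
    rw [completelyMetrizable_iff_isCompletelyMetrizableSpace]
    exact not_isCompletelyMetrizableSpace_vanDouwenSemifilter_inter heven hV hne.right
end

section
/- Let S be a semifilter on ω and let Fin ⊆ 2^ω denote the collection of finite subsets of ω. Then the subspace (2^ω × 2^ω) \ (Fin × (2^ω \ S)) of the product space 2^ω × 2^ω is homeomorphic to a semifilter on ω. -/
open Set

/-!
Write `A` for the set of even numbers and `B` for the set of odd numbers, each identified with `ω`.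
Restricting to `A` and `B` is a homeomorphism from `2^ω` to `2^ω × 2^ω`, and it pulls the subspace
back to `{z | z ∩ A ∉ Fin} ∪ {z | z ∩ B ∈ S}`. Complements of semi-ideals, unions of two
semifilters, and preimages of semifilters under reindexing along a finite-to-one map are
semifilters, so this set is one.
-/

open Filter

section Semifilter

variable {R S T : Set Cantor}

theorem ClosedUnderFinMod.compl_s10 (hR : ClosedUnderFinMod R) : ClosedUnderFinMod Rᶜ := by
  intro x hx y hxy hy
  refine hx (hR y hy x ?_)
  simpa only [ne_comm] using hxy

theorem IsSemiideal.compl_s10 (hR : IsSemiideal R) : IsSemifilter Rᶜ := by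
  obtain ⟨hempty, huniv, hdown, hmod⟩ := hR
  exact ⟨not_not_intro hempty, huniv, fun x hx y hxy hy => hx (hdown y hy x hxy), hmod.compl_s10⟩

theorem IsSemifilter.union (hS : IsSemifilter S) (hT : IsSemifilter T) :
    IsSemifilter (S ∪ T) := by
  obtain ⟨hSempty, hSuniv, hSup, hSmod⟩ := hS
  obtain ⟨hTempty, -, hTup, hTmod⟩ := hT
  refine ⟨not_or_intro hSempty hTempty, Or.inl hSuniv, ?_, ?_⟩
  · exact fun x hx y hxy => hx.imp (hSup x · y hxy) (hTup x · y hxy)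
  · exact fun x hx y hxy => hx.imp (hSmod x · y hxy) (hTmod x · y hxy)

theorem IsSemifilter.preimage_comp {f : ℕ → ℕ} (hS : IsSemifilter S)
    (hf : Tendsto f cofinite cofinite) : IsSemifilter ((· ∘ f) ⁻¹' S) := by
  obtain ⟨hempty, huniv, hup, hmod⟩ := hS
  refine ⟨hempty, huniv, fun x hx y hxy => hup _ hx _ fun n => hxy (f n), ?_⟩
  intro x hx y hxy
  have hagree : ∀ᶠ n in cofinite, x n = y n := hxy
  exact hmod _ hx _ (hf.eventually hagree)

theorem isSemiideal_cantorFin : IsSemiideal CantorFin := by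
  refine ⟨by simp [CantorFin], by simp [CantorFin, infinite_univ], ?_, ?_⟩
  · exact fun y hy x hxy => Finite.subset hy hxy
  · intro x hx y hxy
    refine (Finite.union hx hxy).subset fun n hn => ?_
    by_cases hxn : x n = true
    · exact Or.inl hxn
    · exact Or.inr fun heq => hxn (heq.trans hn)

end Semifilter

/-- The homeomorphism `2^ω ≃ₜ 2^ω × 2^ω` sending `z` to its traces on the even and on the odd
numbers, via `Equiv.natSumNatEquivNat : ℕ ⊕ ℕ ≃ ℕ`. -/
def evenOddHomeomorph : Cantor ≃ₜ Cantor × Cantor :=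
  (Homeomorph.piCongrLeft (Y := fun _ => Bool) Equiv.natSumNatEquivNat).symm.trans
    Homeomorph.sumArrowHomeomorphProdArrow

theorem isSemifilter_preimage_evenOddHomeomorph {R S : Set Cantor} (hR : IsSemiideal R)
    (hS : IsSemifilter S) : IsSemifilter (evenOddHomeomorph ⁻¹' (univ \ R ×ˢ Sᶜ)) := by
  let even : ℕ → ℕ := Equiv.natSumNatEquivNat ∘ Sum.inl
  let odd : ℕ → ℕ := Equiv.natSumNatEquivNat ∘ Sum.inr
  have heven : even.Injective := Equiv.natSumNatEquivNat.injective.comp Sum.inl_injective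
  have hodd : odd.Injective := Equiv.natSumNatEquivNat.injective.comp Sum.inr_injective
  have hpreimage : evenOddHomeomorph ⁻¹' (univ \ R ×ˢ Sᶜ) =
      (· ∘ even) ⁻¹' Rᶜ ∪ (· ∘ odd) ⁻¹' S := by
    rw [← compl_eq_univ_sdiff, compl_prod_eq_union, compl_compl, prod_univ, univ_prod]
    rfl
  rw [hpreimage]
  exact (hR.compl_s10.preimage_comp heven.tendsto_cofinite).union
    (hS.preimage_comp hodd.tendsto_cofinite)

theorem tricky_subspace_homeomorphic_semifilter_general {R S : Set Cantor} (hR : IsSemiideal R)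
    (hS : IsSemifilter S) :
    ∃ T : Set Cantor, IsSemifilter T ∧
      Nonempty ((univ \ R ×ˢ Sᶜ : Set (Cantor × Cantor)) ≃ₜ T) :=
  ⟨evenOddHomeomorph ⁻¹' (univ \ R ×ˢ Sᶜ), isSemifilter_preimage_evenOddHomeomorph hR hS,
    ⟨(evenOddHomeomorph.sets rfl).symm⟩⟩

/-- (2^ω × 2^ω) \ (Fin × (2^ω \ S)) is homeomorphic to a semifilter. -/
theorem tricky_subspace_homeomorphic_semifilter (S : Set Cantor) (hS : IsSemifilter S) :
    ∃ T : Set Cantor, IsSemifilter T ∧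
      Nonempty ((((Set.univ : Set (Cantor × Cantor)) \ (CantorFin ×ˢ Sᶜ)) : Set (Cantor × Cantor)) ≃ₜ T) :=
  tricky_subspace_homeomorphic_semifilter_general isSemiideal_cantorFin hS
end
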